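/- On the 19-element point set {X, Y, Z} ∪ {A_i, B_i : i ∈ Z_8}, the block {X,Y,Z} together with the orbits of the starter blocks {X,A_0,A_1}, {Y,B_0,B_1}, {Z,A_0,A_4}, {Z,B_0,B_4}, {A_0,A_2,B_3}, {A_0,A_3,B_0}, {B_0,B_2,A_4}, {B_0,B_3,A_1} under the permutation (Z)(X Y)(A_0 A_1 … A_7)(B_0 B_1 … B_7) form a Steiner triple system of order 19 with the following properties: the cycle graph C_{XY} consists of exactly two 8-cycles forming a complementary pair, these are the only 8-cycles in the system, and switching either of them yields a system isomorphic to the original; the cycle graphs C_{XZ} and C_{YZ} each consist of four 4-cycles; for each i ∈ Z_8 the cycle graph on {A_i, B_i} consists of a 6-cycle and a 10-cycle, and the cycle graphs on {A_i, A_{i+3}} and {B_i, B_{i+3}} each consist of a 4-cycle and a 12-cycle; on all other pairs of points the cycle graph is a single Hamiltonian 16-cycle. -/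

import Mathlib

/-- A Steiner triple system of order `v` on the point set `Fin v`:
a collection of 3-element blocks such that every pair of distinct points
lies in exactly one block. -/
structure STS (v : ℕ) where
  blocks : Finset (Finset (Fin v))
  card_blocks : ∀ B ∈ blocks, B.card = 3
  covers : ∀ x y : Fin v, x ≠ y → ∃! B, B ∈ blocks ∧ x ∈ B ∧ y ∈ B

/-- Isomorphism of Steiner triple systems on the same point set: a bijection of the
points mapping the block set of one onto the block set of the other. -/
def STS.Iso {v : ℕ} (S S' : STS v) : Prop :=
  ∃ φ : Equiv.Perm (Fin v), ∀ B : Finset (Fin v), B ∈ S.blocks ↔ B.image φ ∈ S'.blocks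

/-- The cycle graph `C_ab` of an STS: vertices are the points outside the block
through `a` and `b` (the remaining points are isolated vertices of this graph),
and `x`, `y` are adjacent whenever `{a,x,y}` or `{b,x,y}` is a block. -/
def STS.cycleGraph {v : ℕ} (S : STS v) (a b : Fin v) : SimpleGraph (Fin v) :=
  SimpleGraph.fromRel fun x y =>
    (∀ B ∈ S.blocks, a ∈ B → b ∈ B → x ∉ B ∧ y ∉ B) ∧
    ((({a, x, y} : Finset (Fin v)) ∈ S.blocks) ∨ (({b, x, y} : Finset (Fin v)) ∈ S.blocks))

/-- `x 0, x 1, …, x (2k-1)` are the consecutive vertices of a cycle of length `2k`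
in the cycle graph `C_ab`, listed so that the blocks through `a` occupy the
even positions and the blocks through `b` the odd positions. -/
def IsSwitchCycle {v : ℕ} (S : STS v) (a b : Fin v) (k : ℕ)
    (x : ZMod (2 * k) → Fin v) : Prop :=
  2 ≤ k ∧ a ≠ b ∧ Function.Injective x ∧
  (∀ i : ZMod (2 * k), (S.cycleGraph a b).Adj (x i) (x (i + 1))) ∧
  (∀ j : Fin k,
    (({a, x ((2 * (j : ℕ) : ℕ)), x ((2 * (j : ℕ) + 1 : ℕ))} : Finset (Fin v)) ∈ S.blocks) ∧
    (({b, x ((2 * (j : ℕ) + 1 : ℕ)), x ((2 * (j : ℕ) + 2 : ℕ))} : Finset (Fin v)) ∈ S.blocks))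

/-- The `2k` blocks of the STS corresponding to the cycle with consecutive
vertices `x 0, …, x (2k-1)` in the cycle graph `C_ab`. -/
def removedBlocks {v : ℕ} (a b : Fin v) (k : ℕ)
    (x : ZMod (2 * k) → Fin v) : Finset (Finset (Fin v)) :=
  (Finset.univ.image fun j : Fin k =>
    ({a, x ((2 * (j : ℕ) : ℕ)), x ((2 * (j : ℕ) + 1 : ℕ))} : Finset (Fin v))) ∪
  (Finset.univ.image fun j : Fin k =>
    ({b, x ((2 * (j : ℕ) + 1 : ℕ)), x ((2 * (j : ℕ) + 2 : ℕ))} : Finset (Fin v)))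

/-- The block set obtained from `S` by the cycle switch on the cycle
`x 0, …, x (2k-1)` of `C_ab`: the `2k` cycle blocks are removed and replaced
by the blocks obtained from them by exchanging the roles of `a` and `b`. -/
def switchedBlocks {v : ℕ} (S : STS v) (a b : Fin v) (k : ℕ)
    (x : ZMod (2 * k) → Fin v) : Finset (Finset (Fin v)) :=
  (S.blocks \ removedBlocks a b k x) ∪
    (removedBlocks a b k x).image (Finset.image (Equiv.swap a b))

/-- `S'` is obtained from `S` by a single cycle switch of a cycle whose length lies
in the set `C`. -/
def SwitchStep {v : ℕ} (C : Set ℕ) (S S' : STS v) : Prop :=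
  ∃ (a b : Fin v) (k : ℕ) (x : ZMod (2 * k) → Fin v),
    2 * k ∈ C ∧ IsSwitchCycle S a b k x ∧ S'.blocks = switchedBlocks S a b k x

/-- The switching graph `Sw_C(v)`: vertices are the isomorphism classes of `STS(v)`s,
with an edge between two (distinct) classes whenever some system in one class is
transformed by a single cycle switch, of a cycle whose length lies in `C`, into a
system in the other class. -/
def SwGraph (v : ℕ) (C : Set ℕ) : SimpleGraph (Quot (@STS.Iso v)) :=
  SimpleGraph.fromRel fun q q' =>
    ∃ S S' : STS v, Quot.mk _ S = q ∧ Quot.mk _ S' = q' ∧ SwitchStep C S S'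

/-- The STS `S` contains a cycle of length `n`, i.e. some cycle graph of `S`
has a cycle of length `n`. -/
def STS.HasCycle {v : ℕ} (S : STS v) (n : ℕ) : Prop :=
  ∃ a b : Fin v, a ≠ b ∧ ∃ (z : Fin v) (w : (S.cycleGraph a b).Walk z z),
    w.IsCycle ∧ w.length = n

/-- `W` is the vertex set of a cycle of length `n` in the cycle graph `C_ab`. -/
def CycleOn {v : ℕ} (S : STS v) (a b : Fin v) (n : ℕ) (W : Finset (Fin v)) : Prop :=
  W.card = n ∧ ∃ z ∈ W, ∃ w : (S.cycleGraph a b).Walk z z,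
    w.IsCycle ∧ w.length = n ∧ ∀ u : Fin v, u ∈ w.support ↔ u ∈ W

/-- The number of cycles of length `n` in the STS `S`: a cycle is recorded as a pair
consisting of the (unordered) pair `{a,b}` of points and the vertex set of the cycle
in `C_ab`. -/
noncomputable def STS.numCycles {v : ℕ} (S : STS v) (n : ℕ) : ℕ :=
  Nat.card {p : Finset (Fin v) × Finset (Fin v) //
    ∃ a b : Fin v, a ≠ b ∧ p.1 = {a, b} ∧ CycleOn S a b n p.2}

/-- The cycle graph `C_ab` decomposes as the disjoint union of cycles whose vertex
sets are listed in `Ws` and whose lengths are given by the list `L`. -/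
def CycleStructure {v : ℕ} (S : STS v) (a b : Fin v) (L : List ℕ) : Prop :=
  ∃ Ws : List (Finset (Fin v)),
    Ws.map Finset.card = L ∧ List.Pairwise Disjoint Ws ∧
    (∀ W ∈ Ws, CycleOn S a b W.card W) ∧
    (∀ z : Fin v, (∀ B ∈ S.blocks, a ∈ B → b ∈ B → z ∉ B) ↔ ∃ W ∈ Ws, z ∈ W)

/-- The six points `a,…,f` carry a Pasch configuration of `S`, with blocks
`{a,b,c}, {a,d,e}, {b,e,f}, {c,d,f}`. -/
def PaschQuad {v : ℕ} (S : STS v) (a b c d e f : Fin v) : Prop :=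
  ({a, b, c, d, e, f} : Finset (Fin v)).card = 6 ∧
  ({a, b, c} : Finset (Fin v)) ∈ S.blocks ∧ ({a, d, e} : Finset (Fin v)) ∈ S.blocks ∧
  ({b, e, f} : Finset (Fin v)) ∈ S.blocks ∧ ({c, d, f} : Finset (Fin v)) ∈ S.blocks

/-- `S` contains a Pasch configuration. -/
def STS.HasPasch {v : ℕ} (S : STS v) : Prop :=
  ∃ a b c d e f : Fin v, PaschQuad S a b c d e f

/-- `P` is (the block set of) a Pasch configuration of `S`. -/
def IsPaschConfig {v : ℕ} (S : STS v) (P : Finset (Finset (Fin v))) : Prop :=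
  ∃ a b c d e f : Fin v, PaschQuad S a b c d e f ∧
    P = {({a, b, c} : Finset (Fin v)), {a, d, e}, {b, e, f}, {c, d, f}}

/-- The block set obtained from `S` by switching the Pasch configuration
`{a,b,c}, {a,d,e}, {b,e,f}, {c,d,f}`: its four blocks are replaced by the unique
other set of four blocks on the same six points covering the same pairs. -/
def paschSwitched {v : ℕ} (S : STS v) (a b c d e f : Fin v) : Finset (Finset (Fin v)) :=
  (S.blocks \ {({a, b, c} : Finset (Fin v)), {a, d, e}, {b, e, f}, {c, d, f}}) ∪
    {({a, b, e} : Finset (Fin v)), {a, c, d}, {b, c, f}, {d, e, f}}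

/-- `S` and `S'` are twin systems: they are non-isomorphic, each contains exactly one
Pasch configuration, and switching this unique Pasch configuration in each system
yields a system isomorphic to the other. -/
def IsTwinPair {v : ℕ} (S S' : STS v) : Prop :=
  ¬ S.Iso S' ∧
  (∃! P, IsPaschConfig S P) ∧ (∃! P, IsPaschConfig S' P) ∧
  (∀ a b c d e f : Fin v, PaschQuad S a b c d e f →
    ∃ T : STS v, T.blocks = paschSwitched S a b c d e f ∧ T.Iso S') ∧
  (∀ a b c d e f : Fin v, PaschQuad S' a b c d e f →
    ∃ T : STS v, T.blocks = paschSwitched S' a b c d e f ∧ T.Iso S)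

/-- The isomorphism classes `q` and `q'` are the classes of a pair of twin systems. -/
def QTwin {v : ℕ} (q q' : Quot (@STS.Iso v)) : Prop :=
  ∃ S S' : STS v, Quot.mk _ S = q ∧ Quot.mk _ S' = q' ∧ IsTwinPair S S'

/-- The point `A_i` (indices mod 8), encoded in `Fin 19`. -/
def qA (i : ℕ) : Fin 19 := ⟨i % 8, by omega⟩

/-- The point `B_i` (indices mod 8). -/
def qB (i : ℕ) : Fin 19 := ⟨8 + i % 8, by omega⟩

/-- The point `X`. -/
def qX : Fin 19 := ⟨16, by omega⟩

/-- The point `Y`. -/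
def qY : Fin 19 := ⟨17, by omega⟩

/-- The point `Z`. -/
def qZ : Fin 19 := ⟨18, by omega⟩

/-- The image of `X` under the `m`-th power of the permutation `(Z)(X Y)(A…)(B…)`. -/
def qXY (m : ℕ) : Fin 19 := if m % 2 = 0 then qX else qY

/-- The image of `Y` under the `m`-th power of the permutation `(Z)(X Y)(A…)(B…)`. -/
def qYX (m : ℕ) : Fin 19 := if m % 2 = 0 then qY else qX

/-- The block `{X,Y,Z}` together with the orbits of the starter blocks `{X,A₀,A₁}`,
`{Y,B₀,B₁}`, `{Z,A₀,A₄}`, `{Z,B₀,B₄}`, `{A₀,A₂,B₃}`, `{A₀,A₃,B₀}`, `{B₀,B₂,A₄}`,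
`{B₀,B₃,A₁}` under the permutation `(Z)(X Y)(A₀ A₁ … A₇)(B₀ B₁ … B₇)`. -/
def rot8Blocks : Finset (Finset (Fin 19)) :=
  insert ({qX, qY, qZ} : Finset (Fin 19)) <|
    (Finset.range 8).biUnion fun m =>
      {({qXY m, qA m, qA (m + 1)} : Finset (Fin 19)),
       {qYX m, qB m, qB (m + 1)},
       {qZ, qA m, qA (m + 4)},
       {qZ, qB m, qB (m + 4)},
       {qA m, qA (m + 2), qB (m + 3)},
       {qA m, qA (m + 3), qB m},
       {qB m, qB (m + 2), qA (m + 4)},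
       {qB m, qB (m + 3), qA (m + 1)}}

/-!
The cycle graph of two points `a ≠ b` is a union of cycles, which are the orbits of the points off
the block through `a` and `b` under the two involutions sending a point `x` to the third point of
the block through `a` and `x`, respectively `b` and `x`. Given an explicit third-point operation,
the cycle structure of every pair is therefore a finite computation with orbits.

Switching a cycle with vertex set `W` replaces each block that meets both `{a, b}` and `W` by its
image under the transposition of `a` and `b`. The only 8-cycles are the `A`-cycle and the `B`-cycle
of `C_XY`, and the permutation `A_i ↦ B_i ↦ A_{i+1}` fixing `X`, `Y`, `Z` carries the system with
the `A`-cycle switched back to the original; its inverse does the same for the `B`-cycle.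
-/

section Graph

variable {α : Type*} {G : SimpleGraph α}

theorem supp_connectedComponentMk_eq_of_forall_adj {s : Set α} {z : α} (hz : z ∈ s)
    (hadj : ∀ x ∈ s, ∀ y, G.Adj x y → y ∈ s) (hreach : ∀ x ∈ s, G.Reachable z x) :
    (G.connectedComponentMk z).supp = s := by
  refine Set.Subset.antisymm (fun x hx => ?_) fun x hx =>
    SimpleGraph.ConnectedComponent.sound (hreach x hx).symm
  obtain ⟨w⟩ : G.Reachable z x := (SimpleGraph.ConnectedComponent.exact hx).symm
  clear hreach hx
  induction w with
  | nil => exact hz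
  | cons h _ ih => exact ih (hadj _ hz _ h)

theorem card_toFinset_support_of_isCycle [DecidableEq α] {z : α} {w : G.Walk z z}
    (hw : w.IsCycle) : w.support.toFinset.card = w.length := by
  have htail : w.support.toFinset = w.support.tail.toFinset := by
    rw [← w.cons_tail_support, List.toFinset_cons, List.tail_cons, Finset.insert_eq_self]
    exact List.mem_toFinset.2 (SimpleGraph.Walk.end_mem_tail_support hw.not_nil)
  rw [htail, List.toFinset_card_of_nodup hw.support_nodup, List.length_tail, w.length_support,
    Nat.add_sub_cancel]

theorem supp_connectedComponentMk_eq_support [Finite α] {z : α} {w : G.Walk z z}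
    (hG : G.IsCycles) (hw : w.IsCycle) :
    (G.connectedComponentMk z).supp = {x | x ∈ w.support} := by
  classical
  have := Fintype.ofFinite α
  refine supp_connectedComponentMk_eq_of_forall_adj w.start_mem_support (fun x hx y hxy => ?_)
    fun x hx => ⟨w.takeUntil x hx⟩
  have hx' : x ∈ w.toSubgraph.verts := w.mem_verts_toSubgraph.2 hx
  have hadj : w.toSubgraph.Adj x y := (hw.adj_toSubgraph_iff_of_isCycles hG hx' y).2 hxy
  exact w.mem_verts_toSubgraph.1 hadj.snd_mem

end Graph

namespace STS

section ThirdPoint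

variable {v : ℕ} {S : STS v} {x y z : Fin v} {B : Finset (Fin v)}

theorem exists_eq_triple_of_mem (hB : B ∈ S.blocks) (hx : x ∈ B) (hy : y ∈ B) (hxy : x ≠ y) :
    ∃ z, B = {x, y, z} := by
  have hcard : ((B.erase x).erase y).card = 1 := by
    rw [Finset.card_erase_of_mem (Finset.mem_erase.2 ⟨hxy.symm, hy⟩), Finset.card_erase_of_mem hx,
      S.card_blocks B hB]
  obtain ⟨z, hz⟩ := Finset.card_eq_one.1 hcard
  refine ⟨z, ?_⟩
  rw [← hz, Finset.insert_erase (Finset.mem_erase.2 ⟨hxy.symm, hy⟩), Finset.insert_erase hx]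

theorem ne_of_triple_mem (h : {x, y, z} ∈ S.blocks) : x ≠ y ∧ x ≠ z ∧ y ≠ z :=
  Finset.card_triple_eq_three_iff.1 (S.card_blocks _ h)

variable (S) in
/-- The Steiner quasigroup of `S`: for `x ≠ y`, the third point of the block through `x` and `y`,
and `x` itself for `x = y`. -/
noncomputable def third (x y : Fin v) : Fin v :=
  if h : ∃ z, {x, y, z} ∈ S.blocks then h.choose else x

theorem third_self (S : STS v) (x : Fin v) : S.third x x = x :=
  dif_neg fun ⟨_, h⟩ => (ne_of_triple_mem h).1 rfl

theorem triple_third_mem (S : STS v) (hxy : x ≠ y) : {x, y, S.third x y} ∈ S.blocks := by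
  obtain ⟨B, ⟨hB, hx, hy⟩, -⟩ := S.covers x y hxy
  obtain ⟨z, rfl⟩ := exists_eq_triple_of_mem hB hx hy hxy
  have h : ∃ z, {x, y, z} ∈ S.blocks := ⟨z, hB⟩
  rw [third, dif_pos h]
  exact h.choose_spec

theorem eq_triple_third (hB : B ∈ S.blocks) (hx : x ∈ B) (hy : y ∈ B) (hxy : x ≠ y) :
    B = {x, y, S.third x y} :=
  (S.covers x y hxy).unique ⟨hB, hx, hy⟩ ⟨S.triple_third_mem hxy, by simp, by simp⟩

theorem eq_third_of_triple_mem (h : {x, y, z} ∈ S.blocks) : z = S.third x y := by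
  obtain ⟨hxy, hxz, hyz⟩ := ne_of_triple_mem h
  have hz : z ∈ ({x, y, S.third x y} : Finset (Fin v)) := by
    rw [← eq_triple_third h (by simp) (by simp) hxy]
    simp
  simpa [hxz.symm, hyz.symm] using hz

theorem triple_mem_blocks_iff : {x, y, z} ∈ S.blocks ↔ x ≠ y ∧ z = S.third x y :=
  ⟨fun h => ⟨(ne_of_triple_mem h).1, eq_third_of_triple_mem h⟩,
    fun ⟨hxy, hz⟩ => hz ▸ S.triple_third_mem hxy⟩

theorem third_comm (S : STS v) (x y : Fin v) : S.third x y = S.third y x := by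
  rcases eq_or_ne x y with rfl | hxy
  · rfl
  · exact eq_third_of_triple_mem (Finset.insert_comm x y _ ▸ S.triple_third_mem hxy)

theorem third_involutive (S : STS v) (x : Fin v) : Function.Involutive (S.third x) := by
  intro y
  rcases eq_or_ne x y with rfl | hxy
  · rw [third_self, third_self]
  · exact (eq_third_of_triple_mem (Finset.pair_comm y _ ▸ S.triple_third_mem hxy)).symm

theorem third_ne_right (hxy : x ≠ y) : S.third x y ≠ y :=
  (ne_of_triple_mem (S.triple_third_mem hxy)).2.2.symm

variable (S) in
/-- The block through `a` and `b`, provided that `a ≠ b`. Its complement is the vertex set of the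
cycle graph of `a` and `b`. -/
noncomputable def line (a b : Fin v) : Finset (Fin v) := {a, b, S.third a b}

end ThirdPoint

section CycleGraph

variable {v : ℕ} {S : STS v} {a b x y z : Fin v}

theorem notMem_line : z ∉ S.line a b ↔ z ≠ a ∧ z ≠ b ∧ z ≠ S.third a b := by
  simp only [line, Finset.mem_insert, Finset.mem_singleton, not_or]

theorem notMem_line_iff_forall_blocks (hab : a ≠ b) :
    z ∉ S.line a b ↔ ∀ B ∈ S.blocks, a ∈ B → b ∈ B → z ∉ B := by
  refine ⟨fun h B hB ha hb => ?_, fun h => ?_⟩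
  · rwa [eq_triple_third hB ha hb hab]
  · exact h (S.line a b) (S.triple_third_mem hab) (by simp [line]) (by simp [line])

theorem line_comm (S : STS v) (a b : Fin v) : S.line a b = S.line b a := by
  rw [line, line, third_comm, Finset.insert_comm]

theorem third_notMem_line (hx : x ∉ S.line a b) : S.third a x ∉ S.line a b := by
  rw [notMem_line] at hx ⊢
  refine ⟨fun h => hx.1 ?_, fun h => hx.2.2 ?_, fun h => hx.2.1 ?_⟩
  · rw [← S.third_involutive a x, h, third_self]
  · rw [← h, S.third_involutive a x]
  · exact (S.third_involutive a).injective h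

theorem cycleGraph_comm (S : STS v) (a b : Fin v) : S.cycleGraph a b = S.cycleGraph b a := by
  ext x y
  simp only [cycleGraph, SimpleGraph.fromRel_adj]
  grind

theorem third_ne_of_notMem_line (hx : x ∉ S.line a b) : S.third a x ≠ x :=
  third_ne_right (notMem_line.1 hx).1.symm

theorem cycleGraph_adj_iff (hab : a ≠ b) : (S.cycleGraph a b).Adj x y ↔
    x ∉ S.line a b ∧ (y = S.third a x ∨ y = S.third b x) := by
  simp only [cycleGraph, SimpleGraph.fromRel_adj, imp_and, forall_and,
    ← notMem_line_iff_forall_blocks hab, triple_mem_blocks_iff]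
  constructor
  · rintro ⟨-, ⟨⟨hx, -⟩, h⟩ | ⟨⟨-, hx⟩, h⟩⟩
    · exact ⟨hx, h.imp And.right And.right⟩
    · exact ⟨hx, h.imp (fun h => ((S.third_involutive a).eq_iff.1 h.2.symm))
        fun h => ((S.third_involutive b).eq_iff.1 h.2.symm)⟩
  · rintro ⟨hx, rfl | rfl⟩
    · exact ⟨(third_ne_of_notMem_line hx).symm,
        .inl ⟨⟨hx, third_notMem_line hx⟩, .inl ⟨(notMem_line.1 hx).1.symm, rfl⟩⟩⟩
    · rw [line_comm] at hx ⊢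
      exact ⟨(third_ne_of_notMem_line hx).symm,
        .inl ⟨⟨hx, third_notMem_line hx⟩, .inr ⟨(notMem_line.1 hx).1.symm, rfl⟩⟩⟩

theorem neighborSet_cycleGraph (hab : a ≠ b) (hx : x ∉ S.line a b) :
    (S.cycleGraph a b).neighborSet x = {S.third a x, S.third b x} := by
  ext y
  simp only [SimpleGraph.mem_neighborSet, cycleGraph_adj_iff hab, hx, not_false_eq_true, true_and,
    Set.mem_insert_iff, Set.mem_singleton_iff]

theorem isCycles_cycleGraph (hab : a ≠ b) : (S.cycleGraph a b).IsCycles := by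
  rintro x ⟨y, hxy⟩
  rw [neighborSet_cycleGraph hab ((cycleGraph_adj_iff hab).1 hxy).1]
  refine Set.ncard_pair fun h => hab ((S.third_involutive x).injective ?_)
  rwa [S.third_comm x a, S.third_comm x b]

theorem cycleOn_iff_supp (hab : a ≠ b) {n : ℕ} {W : Finset (Fin v)} :
    CycleOn S a b n W ↔ W.card = n ∧
      ∃ z ∉ S.line a b, ((S.cycleGraph a b).connectedComponentMk z).supp = W := by
  have hG : (S.cycleGraph a b).IsCycles := isCycles_cycleGraph hab
  refine and_congr_right fun hcard => ⟨?_, ?_⟩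
  · rintro ⟨z, -, w, hw, -, hW⟩
    refine ⟨z, ((cycleGraph_adj_iff hab).1 (w.adj_snd hw.not_nil)).1, ?_⟩
    rw [supp_connectedComponentMk_eq_support hG hw]
    exact Set.ext hW
  · rintro ⟨z, hz, hW⟩
    have hnbhd : ((S.cycleGraph a b).neighborSet z).Nonempty := by
      rw [neighborSet_cycleGraph hab hz]
      exact Set.insert_nonempty _ _
    obtain ⟨w, hw, hverts⟩ :=
      hG.exists_cycle_toSubgraph_verts_eq_connectedComponentSupp rfl hnbhd
    have hsupport (u : Fin v) : u ∈ w.support ↔ u ∈ W := by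
      rw [← Finset.mem_coe, ← hW, ← hverts, SimpleGraph.Walk.mem_verts_toSubgraph]
    refine ⟨z, (hsupport z).1 w.start_mem_support, w, hw, ?_, hsupport⟩
    rw [← card_toFinset_support_of_isCycle hw, ← hcard]
    congr 1
    ext u
    rw [List.mem_toFinset, hsupport]

end CycleGraph

end STS

open STS

section Cycles

variable {v : ℕ} {S : STS v} {a b x : Fin v}

theorem CycleOn.exists_mem_notMem_line (hab : a ≠ b) {n : ℕ} {W : Finset (Fin v)}
    (hW : CycleOn S a b n W) : ∃ z ∈ W, z ∉ S.line a b := by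
  obtain ⟨-, z, hz, hsupp⟩ := (cycleOn_iff_supp hab).1 hW
  refine ⟨z, ?_, hz⟩
  rw [← Finset.mem_coe, ← hsupp]
  rfl

theorem CycleOn.eq_of_mem (hab : a ≠ b) {m n : ℕ} {W W' : Finset (Fin v)}
    (hW : CycleOn S a b m W) (hW' : CycleOn S a b n W') (hx : x ∈ W) (hx' : x ∈ W') : W = W' := by
  obtain ⟨-, z, -, hz⟩ := (cycleOn_iff_supp hab).1 hW
  obtain ⟨-, z', -, hz'⟩ := (cycleOn_iff_supp hab).1 hW'
  rw [← Finset.coe_inj, ← hz, ← hz']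
  refine congrArg _ (SimpleGraph.ConnectedComponent.eq_of_common_vertex (v := x) ?_ ?_)
  · rwa [hz, Finset.mem_coe]
  · rwa [hz', Finset.mem_coe]

theorem CycleStructure.length_mem (hab : a ≠ b) {L : List ℕ} {n : ℕ}
    {W : Finset (Fin v)} (hL : CycleStructure S a b L) (hW : CycleOn S a b n W) : n ∈ L := by
  obtain ⟨Ws, rfl, -, hWs, hcover⟩ := hL
  obtain ⟨z, hzW, hz⟩ := hW.exists_mem_notMem_line hab
  obtain ⟨W', hW', hzW'⟩ := (hcover z).1 ((notMem_line_iff_forall_blocks hab).1 hz)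
  rw [← hW.1, hW.eq_of_mem hab (hWs W' hW') hzW hzW']
  exact List.mem_map_of_mem hW'

theorem cycleOn_comm {n : ℕ} {W : Finset (Fin v)} :
    CycleOn S a b n W ↔ CycleOn S b a n W := by
  rw [CycleOn, CycleOn, cycleGraph_comm]

theorem cycleStructure_comm {L : List ℕ} :
    CycleStructure S a b L ↔ CycleStructure S b a L := by
  simp only [CycleStructure, cycleOn_comm (a := a), imp.swap (a := a ∈ _)]

theorem finset_pair_eq_pair_iff {α : Type*} [DecidableEq α] {a b c d : α} :
    ({a, b} : Finset α) = {c, d} ↔ a = c ∧ b = d ∨ a = d ∧ b = c := by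
  rw [← Finset.coe_inj, Finset.coe_pair, Finset.coe_pair, Set.pair_eq_pair_iff]

theorem CycleStructure.of_pair_eq {c d : Fin v} {L : List ℕ} (hL : CycleStructure S c d L)
    (h : ({a, b} : Finset (Fin v)) = {c, d}) : CycleStructure S a b L := by
  obtain ⟨rfl, rfl⟩ | ⟨rfl, rfl⟩ := finset_pair_eq_pair_iff.1 h
  exacts [hL, cycleStructure_comm.1 hL]

end Cycles

section Orbits

variable {v : ℕ} {S : STS v} {a b z : Fin v}

/-- The list `z, f z, g (f z), f (g (f z)), …` of length `2 * k`. -/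
def alternatingOrbit {α : Type*} (f g : α → α) (k : ℕ) (z : α) : List α :=
  (List.iterate (g ∘ f) z k).flatMap fun x => [x, f x]

/-- The cycle graph `C_ab` of the triple system with third-point operation `op` is the disjoint
union of cycles: each `c ∈ cycles` records one, of length `2 * c.2`, obtained from the vertex `c.1`
by applying `op a` and `op b` alternately. -/
def IsCycleDecomposition {α : Type*} [Fintype α] [DecidableEq α] (op : α → α → α) (a b : α)
    (cycles : List (α × ℕ)) : Prop :=
  (∀ c ∈ cycles, 0 < c.2 ∧ (op b ∘ op a).IsPeriodicPt c.2 c.1) ∧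
    (cycles.flatMap fun c => alternatingOrbit (op a) (op b) c.2 c.1).Nodup ∧
    (cycles.flatMap fun c => alternatingOrbit (op a) (op b) c.2 c.1).toFinset = {a, b, op a b}ᶜ

instance {α : Type*} [Fintype α] [DecidableEq α] (op : α → α → α) (a b : α)
    (cycles : List (α × ℕ)) : Decidable (IsCycleDecomposition op a b cycles) :=
  inferInstanceAs (Decidable (_ ∧ _ ∧ _))

theorem length_alternatingOrbit {α : Type*} (f g : α → α) (k : ℕ) (z : α) :
    (alternatingOrbit f g k z).length = 2 * k := by
  simp [alternatingOrbit, List.length_flatMap, mul_comm]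

theorem mem_alternatingOrbit {α : Type*} {f g : α → α} {k : ℕ} {x z : α} (hk : 0 < k)
    (hz : (g ∘ f).IsPeriodicPt k z) :
    x ∈ alternatingOrbit f g k z ↔ ∃ i, x = (g ∘ f)^[i] z ∨ x = f ((g ∘ f)^[i] z) := by
  simp only [alternatingOrbit, List.mem_flatMap, List.mem_iterate, List.mem_cons,
    List.not_mem_nil, or_false]
  constructor
  · rintro ⟨_, ⟨i, -, rfl⟩, h⟩
    exact ⟨i, h⟩
  · rintro ⟨i, h⟩
    exact ⟨_, ⟨i % k, Nat.mod_lt i hk, rfl⟩, by rwa [hz.iterate_mod_apply]⟩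

theorem supp_eq_toFinset_alternatingOrbit (hab : a ≠ b) {k : ℕ} (hk : 0 < k)
    (hz : (S.third b ∘ S.third a).IsPeriodicPt k z)
    (hline : ∀ x ∈ alternatingOrbit (S.third a) (S.third b) k z, x ∉ S.line a b) :
    ((S.cycleGraph a b).connectedComponentMk z).supp =
      (alternatingOrbit (S.third a) (S.third b) k z).toFinset := by
  set h := S.third b ∘ S.third a with hh
  have hmem {x} := mem_alternatingOrbit (x := x) hk hz
  have hadj_left (i : ℕ) : (S.cycleGraph a b).Adj (h^[i] z) (S.third a (h^[i] z)) :=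
    (cycleGraph_adj_iff hab).2 ⟨hline _ (hmem.2 ⟨i, .inl rfl⟩), .inl rfl⟩
  have hadj_right (i : ℕ) : (S.cycleGraph a b).Adj (S.third a (h^[i] z)) (h^[i + 1] z) := by
    rw [Function.iterate_succ_apply']
    exact (cycleGraph_adj_iff hab).2 ⟨hline _ (hmem.2 ⟨i, .inr rfl⟩), .inr rfl⟩
  have hreach (i : ℕ) : (S.cycleGraph a b).Reachable z (h^[i] z) := by
    induction i with
    | zero => exact .rfl
    | succ i ih => exact (ih.trans (hadj_left i).reachable).trans (hadj_right i).reachable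
  refine supp_connectedComponentMk_eq_of_forall_adj ?_ (fun x hx y hxy => ?_) fun x hx => ?_
  · exact List.mem_toFinset.2 (hmem.2 ⟨0, .inl rfl⟩)
  · rw [Finset.mem_coe, List.mem_toFinset, hmem] at hx ⊢
    obtain ⟨-, rfl | rfl⟩ := (cycleGraph_adj_iff hab).1 hxy <;> obtain ⟨i, rfl | rfl⟩ := hx
    · exact ⟨i, .inr rfl⟩
    · exact ⟨i, .inl (S.third_involutive a _)⟩
    · obtain ⟨j, hj⟩ : ∃ j, h^[i] z = h^[j + 1] z := by
        refine ⟨i + k - 1, ?_⟩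
        rw [Nat.sub_add_cancel (by omega), Function.iterate_add_apply, hz.eq]
      exact ⟨j, .inr (by rw [hj, Function.iterate_succ_apply', hh, Function.comp_apply,
        S.third_involutive b])⟩
    · exact ⟨i + 1, .inl (Function.iterate_succ_apply' h i z).symm⟩
  · obtain ⟨i, rfl | rfl⟩ := hmem.1 (List.mem_toFinset.1 hx)
    · exact hreach i
    · exact (hreach i).trans (hadj_left i).reachable

namespace IsCycleDecomposition

variable {cycles : List (Fin v × ℕ)} {c : Fin v × ℕ}

theorem notMem_line_iff (h : IsCycleDecomposition S.third a b cycles) :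
    z ∉ S.line a b ↔ ∃ c ∈ cycles, z ∈ alternatingOrbit (S.third a) (S.third b) c.2 c.1 := by
  rw [line, ← Finset.mem_compl, ← h.2.2, List.mem_toFinset, List.mem_flatMap]

theorem cycleOn (h : IsCycleDecomposition S.third a b cycles) (hab : a ≠ b) (hc : c ∈ cycles) :
    CycleOn S a b (2 * c.2) (alternatingOrbit (S.third a) (S.third b) c.2 c.1).toFinset := by
  obtain ⟨hpos, hperiodic⟩ := h.1 c hc
  have hnodup := (List.nodup_flatMap.1 h.2.1).1 c hc
  refine (cycleOn_iff_supp hab).2 ⟨?_, c.1, ?_, ?_⟩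
  · rw [List.toFinset_card_of_nodup hnodup, length_alternatingOrbit]
  · exact h.notMem_line_iff.2 ⟨c, hc, (mem_alternatingOrbit hpos hperiodic).2 ⟨0, .inl rfl⟩⟩
  · exact supp_eq_toFinset_alternatingOrbit hab hpos hperiodic fun x hx =>
      h.notMem_line_iff.2 ⟨c, hc, hx⟩

theorem exists_eq_of_cycleOn (h : IsCycleDecomposition S.third a b cycles) (hab : a ≠ b) {n : ℕ}
    {W : Finset (Fin v)} (hW : CycleOn S a b n W) :
    ∃ c ∈ cycles, W = (alternatingOrbit (S.third a) (S.third b) c.2 c.1).toFinset := by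
  obtain ⟨z, hzW, hz⟩ := hW.exists_mem_notMem_line hab
  obtain ⟨c, hc, hzc⟩ := h.notMem_line_iff.1 hz
  exact ⟨c, hc, hW.eq_of_mem hab (h.cycleOn hab hc) hzW (List.mem_toFinset.2 hzc)⟩

theorem cycleStructure (h : IsCycleDecomposition S.third a b cycles) (hab : a ≠ b) :
    CycleStructure S a b (cycles.map fun c => 2 * c.2) := by
  refine ⟨cycles.map fun c => (alternatingOrbit (S.third a) (S.third b) c.2 c.1).toFinset,
    ?_, ?_, ?_, fun z => ?_⟩
  · rw [List.map_map]
    exact List.map_congr_left fun c hc => (h.cycleOn hab hc).1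
  · rw [List.pairwise_map]
    exact (List.nodup_flatMap.1 h.2.1).2.imp List.disjoint_toFinset_iff_disjoint.2
  · simp only [List.forall_mem_map]
    intro c hc
    rw [(h.cycleOn hab hc).1]
    exact h.cycleOn hab hc
  · simp [← notMem_line_iff_forall_blocks hab, h.notMem_line_iff]

end IsCycleDecomposition

end Orbits

section Switch

variable {v : ℕ} {S T : STS v} {a b : Fin v} {k : ℕ} {x : ZMod (2 * k) → Fin v}
  {W : Finset (Fin v)} {B : Finset (Fin v)}

/-- The effect on a single block `B` of switching the cycle of `C_ab` with vertex set `W`. -/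
def switchBlock (a b : Fin v) (W B : Finset (Fin v)) : Finset (Fin v) :=
  if (a ∈ B ∨ b ∈ B) ∧ ¬Disjoint W B then B.image (Equiv.swap a b) else B

theorem switchBlock_comm (a b : Fin v) (W : Finset (Fin v)) :
    switchBlock a b W = switchBlock b a W := by
  ext1 B
  simp only [switchBlock, Equiv.swap_comm a, or_comm (a := a ∈ B)]

theorem exists_eq_two_mul_or_eq_two_mul_add_one (hk : 0 < k) (i : ZMod (2 * k)) :
    ∃ j : Fin k, i = (2 * (j : ℕ) : ℕ) ∨ i = (2 * (j : ℕ) + 1 : ℕ) := by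
  have : NeZero (2 * k) := ⟨by omega⟩
  have hlt : i.val < 2 * k := i.val_lt
  obtain ⟨j, hj⟩ := Nat.even_or_odd' i.val
  refine ⟨⟨j, by omega⟩, hj.imp (fun h => ?_) fun h => ?_⟩ <;>
    exact i.natCast_zmod_val.symm.trans (congrArg _ h)

namespace IsSwitchCycle

theorem supp_eq_range (hx : IsSwitchCycle S a b k x) :
    ((S.cycleGraph a b).connectedComponentMk (x 0)).supp = Set.range x := by
  obtain ⟨hk, hab, hinj, hadj, -⟩ := hx
  have : NeZero (2 * k) := ⟨by omega⟩
  have htwo : (2 : ZMod (2 * k)) ≠ 0 :=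
    mod_cast (ZMod.natCast_eq_zero_iff 2 (2 * k)).not.2
      (Nat.not_dvd_of_pos_of_lt two_pos (by omega))
  refine supp_connectedComponentMk_eq_of_forall_adj ⟨0, rfl⟩ ?_ ?_
  · rintro _ ⟨i, rfl⟩ y hy
    have hprev : (S.cycleGraph a b).Adj (x i) (x (i - 1)) := by
      simpa using (hadj (i - 1)).symm
    have hne : x (i + 1) ≠ x (i - 1) := hinj.ne fun h => htwo (by linear_combination h)
    have hnbhd : {x (i + 1), x (i - 1)} = (S.cycleGraph a b).neighborSet (x i) := by
      refine Set.eq_of_subset_of_ncard_le (Set.pair_subset (hadj i) hprev) ?_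
      rw [isCycles_cycleGraph hab ⟨_, hprev⟩, Set.ncard_pair hne]
    obtain rfl | rfl : y ∈ ({x (i + 1), x (i - 1)} : Set (Fin v)) := hnbhd ▸ hy
    exacts [⟨_, rfl⟩, ⟨_, rfl⟩]
  · rintro _ ⟨i, rfl⟩
    rw [← i.natCast_zmod_val]
    induction i.val with
    | zero => simp
    | succ n ih => exact ih.trans (by simpa using (hadj n).reachable)

theorem cycleOn (hx : IsSwitchCycle S a b k x) (hW : (W : Set (Fin v)) = Set.range x) :
    CycleOn S a b (2 * k) W := by
  have ⟨hk, hab, hinj, hadj, _⟩ := hx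
  have : NeZero (2 * k) := ⟨by omega⟩
  refine (cycleOn_iff_supp hab).2 ⟨?_, x 0, ((cycleGraph_adj_iff hab).1 (hadj 0)).1, ?_⟩
  · rw [← Set.ncard_coe_finset, hW, Set.ncard_range_of_injective hinj, Nat.card_zmod]
  · rw [hW, hx.supp_eq_range]

theorem mem_removedBlocks_iff (hx : IsSwitchCycle S a b k x) :
    B ∈ removedBlocks a b k x ↔ B ∈ S.blocks ∧ (a ∈ B ∨ b ∈ B) ∧ ∃ i, x i ∈ B := by
  obtain ⟨hk, hab, -, hadj, hblocks⟩ := hx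
  have hne (i) : x i ≠ a ∧ x i ≠ b :=
    have := notMem_line.1 ((cycleGraph_adj_iff hab).1 (hadj i)).1
    ⟨this.1, this.2.1⟩
  simp only [removedBlocks, Finset.mem_union, Finset.mem_image, Finset.mem_univ, true_and]
  constructor
  · rintro (⟨j, rfl⟩ | ⟨j, rfl⟩)
    · exact ⟨(hblocks j).1, by simp, _, Finset.mem_insert_of_mem (Finset.mem_insert_self _ _)⟩
    · exact ⟨(hblocks j).2, by simp, _, Finset.mem_insert_of_mem (Finset.mem_insert_self _ _)⟩
  · rintro ⟨hB, ha | hb, i, hi⟩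
    · left
      obtain ⟨j, rfl | rfl⟩ := exists_eq_two_mul_or_eq_two_mul_add_one (by omega) i
      all_goals
        exact ⟨j, (S.covers a _ (hne _).1.symm).unique ⟨(hblocks j).1, by simp, by simp⟩
          ⟨hB, ha, hi⟩⟩
    · right
      obtain ⟨j, hj⟩ := exists_eq_two_mul_or_eq_two_mul_add_one (by omega) (i - 1)
      obtain rfl | rfl : i = (2 * (j : ℕ) + 1 : ℕ) ∨ i = (2 * (j : ℕ) + 2 : ℕ) := by
        refine hj.imp (fun h => ?_) fun h => ?_ <;> push_cast at h ⊢ <;> linear_combination h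
      all_goals
        exact ⟨j, (S.covers b _ (hne _).2.symm).unique ⟨(hblocks j).2, by simp, by simp⟩
          ⟨hB, hb, hi⟩⟩

theorem switchedBlocks_eq_image (hx : IsSwitchCycle S a b k x)
    (hW : (W : Set (Fin v)) = Set.range x) :
    switchedBlocks S a b k x = S.blocks.image (switchBlock a b W) := by
  have hremoved : removedBlocks a b k x =
      S.blocks.filter fun B => (a ∈ B ∨ b ∈ B) ∧ ¬Disjoint W B := by
    ext B
    rw [hx.mem_removedBlocks_iff, Finset.mem_filter, Finset.not_disjoint_iff]
    simp only [← Finset.mem_coe (s := W), hW, Set.mem_range, exists_exists_eq_and]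
  rw [switchedBlocks, hremoved, ← Finset.filter_not]
  ext C
  simp only [switchBlock, Finset.mem_union, Finset.mem_filter, Finset.mem_image]
  grind

end IsSwitchCycle

theorem iso_of_image_eq (φ : Equiv.Perm (Fin v))
    (h : T.blocks.image (Finset.image φ) = S.blocks) : T.Iso S :=
  ⟨φ, fun B => by rw [← h, (Finset.image_injective φ.injective).mem_finset_image]⟩

end Switch

section Rot8

theorem qA_mod (i : ℕ) : qA (i % 8) = qA i :=
  Fin.ext (Nat.mod_mod i 8)

theorem qB_mod (i : ℕ) : qB (i % 8) = qB i :=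
  Fin.ext (congrArg (8 + ·) (Nat.mod_mod i 8))

theorem qA_mod_add (i k : ℕ) : qA (i % 8 + k) = qA (i + k) :=
  Fin.ext (Nat.mod_add_mod i 8 k)

theorem qB_mod_add (i k : ℕ) : qB (i % 8 + k) = qB (i + k) :=
  Fin.ext (congrArg (8 + ·) (Nat.mod_add_mod i 8 k))

/-- The shift `d` such that, with `X`, `Y`, `Z` numbered `s = 0, 1, 2` and indices taken modulo `8`,
the point `s` is on a block with `A_j` and `A_{j+d}`, and on one with `B_{j-1}` and `B_{j-1+d}`. -/
def rot8Shift (s j : ℕ) : ℕ :=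
  if s = 2 then 4 else if (s + j) % 2 = 0 then 1 else 7

/-- The third point of the block through `A_i` and `B_j`, read off from `j - i` modulo `8`. -/
def rot8ThirdMixed (i j : ℕ) : Fin 19 :=
  [qA (i + 3), qA (i + 6), qB (i + 7), qA (i + 2), qB (i + 6), qA j, qB (i + 4), qB (i + 2)].getD
    ((j + 8 - i) % 8) qZ

/-- An explicit formula for the third-point operation of the system with blocks `rot8Blocks`. A
point `p` is one of the `A_i`, the `B_i` or `X, Y, Z` according to `p / 8`, and has index `p % 8`
there; two points of the same rotational orbit are distinguished by the difference of their
indices. -/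
def rot8Third (x y : Fin 19) : Fin 19 :=
  let i := x.val % 8
  let j := y.val % 8
  match x.val / 8, y.val / 8 with
  | 0, 0 =>
    [qA i, qXY i, qB (i + 3), qB i, qZ, qB j, qB (j + 3), qXY j].getD ((j + 8 - i) % 8) qZ
  | 1, 1 =>
    [qB i, qYX i, qA (i + 4), qA (i + 1), qZ, qA (j + 1), qA (j + 4), qYX j].getD
      ((j + 8 - i) % 8) qZ
  | 0, 1 => rot8ThirdMixed i j
  | 1, 0 => rot8ThirdMixed j i
  | 0, _ => qA (i + rot8Shift j i)
  | _, 0 => qA (j + rot8Shift i j)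
  | 1, _ => qB (i + rot8Shift j (i + 1))
  | _, 1 => qB (j + rot8Shift i (j + 1))
  | _, _ => ⟨16 + (6 - i - j) % 3, by omega⟩

/-- The pairs `{a, b}` of points whose cycle graph in `rot8System` is not a Hamiltonian cycle. -/
def IsExceptionalPair (a b : Fin 19) : Prop :=
  ({a, b} : Finset (Fin 19)) = {qX, qY} ∨
    ({a, b} : Finset (Fin 19)) = {qX, qZ} ∨
    ({a, b} : Finset (Fin 19)) = {qY, qZ} ∨
    ∃ i : ℕ, ({a, b} : Finset (Fin 19)) = {qA i, qB i} ∨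
      ({a, b} : Finset (Fin 19)) = {qA i, qA (i + 3)} ∨
      ({a, b} : Finset (Fin 19)) = {qB i, qB (i + 3)}

theorem exists_lt_eight_iff {p : ℕ → Prop} (hp : ∀ i, p i → p (i % 8)) :
    (∃ i < 8, p i) ↔ ∃ i, p i :=
  ⟨fun ⟨i, _, hi⟩ => ⟨i, hi⟩, fun ⟨i, hi⟩ => ⟨i % 8, Nat.mod_lt i (by decide), hp i hi⟩⟩

instance (a b : Fin 19) : Decidable (IsExceptionalPair a b) :=
  decidable_of_iff _ <| or_congr_right <| or_congr_right <| or_congr_right <|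
    exists_lt_eight_iff fun i hi => by rwa [qA_mod, qA_mod_add, qB_mod, qB_mod_add]

theorem image_card_rot8Blocks : rot8Blocks.image Finset.card = {3} := by decide +kernel

theorem card_filter_rot8Blocks_eq_one :
    ∀ x y : Fin 19, x ≠ y → (rot8Blocks.filter fun B => x ∈ B ∧ y ∈ B).card = 1 := by
  decide +kernel

/-- The Steiner triple system of order `19` with block set `rot8Blocks`. -/
def rot8System : STS 19 where
  blocks := rot8Blocks
  card_blocks B hB :=
    Finset.mem_singleton.1 (image_card_rot8Blocks ▸ Finset.mem_image_of_mem Finset.card hB)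
  covers x y hxy := by
    simpa only [Finset.mem_filter] using
      Finset.card_eq_one_iff_existsUnique.1 (card_filter_rot8Blocks_eq_one x y hxy)

theorem triple_rot8Third_mem :
    ∀ x y : Fin 19, x ≠ y → {x, y, rot8Third x y} ∈ rot8Blocks := by
  decide +kernel

theorem rot8Third_self : ∀ x : Fin 19, rot8Third x x = x := by decide +kernel

/-- The permutation `A_i ↦ B_i ↦ A_{i+1}` fixing `X`, `Y` and `Z`. Its square rotates the `A_i` and
the `B_i` but, unlike the rotation used to build the system, does not exchange `X` and `Y`. -/
def rot8Twist : Equiv.Perm (Fin 19) where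
  toFun p := if p.val < 8 then qB p else if p.val < 16 then qA (p + 1) else p
  invFun p := if p.val < 8 then qB (p + 7) else if p.val < 16 then qA p else p
  left_inv := by decide
  right_inv := by decide

theorem image_rot8Twist_switchBlock_A :
    (rot8Blocks.image (switchBlock qX qY ((Finset.range 8).image qA))).image
      (Finset.image rot8Twist) = rot8Blocks := by
  decide +kernel

theorem image_rot8Twist_symm_switchBlock_B :
    (rot8Blocks.image (switchBlock qX qY ((Finset.range 8).image qB))).image
      (Finset.image rot8Twist.symm) = rot8Blocks := by
  decide +kernel

namespace rot8System

theorem third_eq_rot8Third : rot8System.third = rot8Third := by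
  ext1 x
  ext1 y
  rcases eq_or_ne x y with rfl | hxy
  · rw [third_self, rot8Third_self]
  · exact (eq_third_of_triple_mem (S := rot8System) (triple_rot8Third_mem x y hxy)).symm

theorem cycleStructure_of_isCycleDecomposition {a b : Fin 19} {cycles : List (Fin 19 × ℕ)}
    (hab : a ≠ b) (h : IsCycleDecomposition rot8Third a b cycles) :
    CycleStructure rot8System a b (cycles.map fun c => 2 * c.2) :=
  IsCycleDecomposition.cycleStructure (third_eq_rot8Third ▸ h) hab

theorem isCycleDecomposition_X_Y :
    IsCycleDecomposition rot8Third qX qY [(qA 0, 4), (qB 0, 4)] := by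
  decide +kernel

theorem cycleStructure_X_Y : CycleStructure rot8System qX qY [8, 8] :=
  cycleStructure_of_isCycleDecomposition (by decide) isCycleDecomposition_X_Y

theorem cycleStructure_X_Z : CycleStructure rot8System qX qZ [4, 4, 4, 4] := by
  have h : IsCycleDecomposition rot8Third qX qZ [(qA 0, 2), (qA 2, 2), (qB 0, 2), (qB 2, 2)] := by
    decide +kernel
  exact cycleStructure_of_isCycleDecomposition (by decide) h

theorem cycleStructure_Y_Z : CycleStructure rot8System qY qZ [4, 4, 4, 4] := by
  have h : IsCycleDecomposition rot8Third qY qZ [(qA 0, 2), (qA 2, 2), (qB 0, 2), (qB 2, 2)] := by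
    decide +kernel
  exact cycleStructure_of_isCycleDecomposition (by decide) h

theorem cycleStructure_A_B (i : ℕ) : CycleStructure rot8System (qA i) (qB i) [6, 10] := by
  have h : ∀ i : Fin 8, qA i ≠ qB i ∧
      IsCycleDecomposition rot8Third (qA i) (qB i) [(qA (i + 5), 3), (qA (i + 1), 5)] := by
    decide +kernel
  obtain ⟨hne, hdecomp⟩ := h ⟨i % 8, Nat.mod_lt i (by decide)⟩
  rw [← qA_mod i, ← qB_mod i]
  exact cycleStructure_of_isCycleDecomposition hne hdecomp

theorem cycleStructure_A_A_add_three (i : ℕ) :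
    CycleStructure rot8System (qA i) (qA (i + 3)) [4, 12] := by
  have h : ∀ i : Fin 8, qA i ≠ qA (i + 3) ∧
      IsCycleDecomposition rot8Third (qA i) (qA (i + 3)) [(qA (i + 4), 2), (qA (i + 1), 6)] := by
    decide +kernel
  obtain ⟨hne, hdecomp⟩ := h ⟨i % 8, Nat.mod_lt i (by decide)⟩
  rw [← qA_mod i, ← qA_mod_add i 3]
  exact cycleStructure_of_isCycleDecomposition hne hdecomp

theorem cycleStructure_B_B_add_three (i : ℕ) :
    CycleStructure rot8System (qB i) (qB (i + 3)) [4, 12] := by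
  have h : ∀ i : Fin 8, qB i ≠ qB (i + 3) ∧
      IsCycleDecomposition rot8Third (qB i) (qB (i + 3)) [(qB (i + 4), 2), (qA i, 6)] := by
    decide +kernel
  obtain ⟨hne, hdecomp⟩ := h ⟨i % 8, Nat.mod_lt i (by decide)⟩
  rw [← qB_mod i, ← qB_mod_add i 3]
  exact cycleStructure_of_isCycleDecomposition hne hdecomp

theorem exists_isCycleDecomposition_sixteen : ∀ a b : Fin 19, a < b → ¬IsExceptionalPair a b →
    ∃ z, IsCycleDecomposition rot8Third a b [(z, 8)] := by
  decide +kernel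

theorem cycleStructure_of_not_isExceptionalPair {a b : Fin 19} (hab : a ≠ b)
    (h : ¬IsExceptionalPair a b) : CycleStructure rot8System a b [16] := by
  wlog hlt : a < b generalizing a b
  · refine cycleStructure_comm.1 (this hab.symm ?_ (hab.lt_or_gt.resolve_left hlt))
    rwa [IsExceptionalPair, Finset.pair_comm]
  · obtain ⟨z, hz⟩ := exists_isCycleDecomposition_sixteen a b hlt h
    exact cycleStructure_of_isCycleDecomposition hab hz

theorem pair_eq_X_Y_of_cycleOn_eight {a b : Fin 19} {W : Finset (Fin 19)} (hab : a ≠ b)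
    (hW : CycleOn rot8System a b 8 W) : ({a, b} : Finset (Fin 19)) = {qX, qY} := by
  have eight_mem {L : List ℕ} (hL : CycleStructure rot8System a b L) : 8 ∈ L :=
    hL.length_mem hab hW
  by_cases h : IsExceptionalPair a b
  · obtain h | h | h | ⟨i, h | h | h⟩ := h
    · exact h
    · exact absurd (eight_mem (cycleStructure_X_Z.of_pair_eq h)) (by decide)
    · exact absurd (eight_mem (cycleStructure_Y_Z.of_pair_eq h)) (by decide)
    · exact absurd (eight_mem ((cycleStructure_A_B i).of_pair_eq h)) (by decide)
    · exact absurd (eight_mem ((cycleStructure_A_A_add_three i).of_pair_eq h)) (by decide)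
    · exact absurd (eight_mem ((cycleStructure_B_B_add_three i).of_pair_eq h)) (by decide)
  · exact absurd (eight_mem (cycleStructure_of_not_isExceptionalPair hab h)) (by decide)

theorem eq_image_qA_or_eq_image_qB_of_cycleOn {n : ℕ} {W : Finset (Fin 19)}
    (hW : CycleOn rot8System qX qY n W) :
    W = (Finset.range 8).image qA ∨ W = (Finset.range 8).image qB := by
  have h : IsCycleDecomposition rot8System.third qX qY [(qA 0, 4), (qB 0, 4)] :=
    third_eq_rot8Third ▸ isCycleDecomposition_X_Y
  obtain ⟨c, hc, rfl⟩ := h.exists_eq_of_cycleOn (by decide) hW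
  rw [third_eq_rot8Third]
  simp only [List.mem_cons, List.not_mem_nil, or_false] at hc
  obtain rfl | rfl := hc
  · left
    decide +kernel
  · right
    decide +kernel

theorem iso_of_blocks_eq {W : Finset (Fin 19)} {T : STS 19}
    (hW : CycleOn rot8System qX qY 8 W)
    (hT : T.blocks = rot8Blocks.image (switchBlock qX qY W)) : T.Iso rot8System := by
  obtain rfl | rfl := eq_image_qA_or_eq_image_qB_of_cycleOn hW
  · exact iso_of_image_eq rot8Twist (hT ▸ image_rot8Twist_switchBlock_A)
  · exact iso_of_image_eq rot8Twist.symm (hT ▸ image_rot8Twist_symm_switchBlock_B)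

theorem iso_of_isSwitchCycle {a b : Fin 19} {x : ZMod (2 * 4) → Fin 19} {T : STS 19}
    (hx : IsSwitchCycle rot8System a b 4 x) (hT : T.blocks = switchedBlocks rot8System a b 4 x) :
    T.Iso rot8System := by
  obtain ⟨W, hW⟩ := (Set.finite_range x).exists_finset_coe
  have hcycle := hx.cycleOn hW
  rw [hx.switchedBlocks_eq_image hW] at hT
  obtain ⟨rfl, rfl⟩ | ⟨rfl, rfl⟩ :=
    finset_pair_eq_pair_iff.1 (pair_eq_X_Y_of_cycleOn_eight hx.2.1 hcycle)
  · exact iso_of_blocks_eq hcycle hT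
  · rw [switchBlock_comm] at hT
    exact iso_of_blocks_eq (cycleOn_comm.1 hcycle) hT

end rot8System

end Rot8

/-- The listed starter blocks generate an `STS(19)` in which the
cycle graph `C_{XY}` consists of exactly two complementary 8-cycles (the only
8-cycles of the system, and switching any 8-cycle yields a system isomorphic to the
original); `C_{XZ}` and `C_{YZ}` each consist of four 4-cycles; each `C_{A_i B_i}`
consists of a 6-cycle and a 10-cycle; each `C_{A_i A_{i+3}}` and `C_{B_i B_{i+3}}`
consists of a 4-cycle and a 12-cycle; and on every other pair of points the cycle
graph is a single Hamiltonian 16-cycle. -/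
theorem rot8_system_cycle_structure :
    ∃ S : STS 19, S.blocks = rot8Blocks ∧
      CycleStructure S qX qY [8, 8] ∧
      (∀ (a b : Fin 19) (W : Finset (Fin 19)), a ≠ b → CycleOn S a b 8 W →
        ({a, b} : Finset (Fin 19)) = {qX, qY}) ∧
      (∀ (a b : Fin 19) (x : ZMod (2 * 4) → Fin 19) (T : STS 19),
        IsSwitchCycle S a b 4 x → T.blocks = switchedBlocks S a b 4 x → T.Iso S) ∧
      CycleStructure S qX qZ [4, 4, 4, 4] ∧
      CycleStructure S qY qZ [4, 4, 4, 4] ∧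
      (∀ i : ℕ,
        CycleStructure S (qA i) (qB i) [6, 10] ∧
        CycleStructure S (qA i) (qA (i + 3)) [4, 12] ∧
        CycleStructure S (qB i) (qB (i + 3)) [4, 12]) ∧
      (∀ a b : Fin 19, a ≠ b →
        ¬(({a, b} : Finset (Fin 19)) = {qX, qY} ∨
          ({a, b} : Finset (Fin 19)) = {qX, qZ} ∨
          ({a, b} : Finset (Fin 19)) = {qY, qZ} ∨
          ∃ i : ℕ, ({a, b} : Finset (Fin 19)) = {qA i, qB i} ∨
            ({a, b} : Finset (Fin 19)) = {qA i, qA (i + 3)} ∨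
            ({a, b} : Finset (Fin 19)) = {qB i, qB (i + 3)}) →
        CycleStructure S a b [16]) := by
  refine ⟨rot8System, rfl, rot8System.cycleStructure_X_Y, ?_, ?_, rot8System.cycleStructure_X_Z,
    rot8System.cycleStructure_Y_Z, fun i => ⟨?_, ?_, ?_⟩, ?_⟩
  · exact fun a b W => rot8System.pair_eq_X_Y_of_cycleOn_eight
  · exact fun a b x T => rot8System.iso_of_isSwitchCycle
  · exact rot8System.cycleStructure_A_B i
  · exact rot8System.cycleStructure_A_A_add_three i
  · exact rot8System.cycleStructure_B_B_add_three i
  · exact fun a b => rot8System.cycleStructure_of_not_isExceptionalPair
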